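/- arXiv:1904.06480 — 2 statements merged into one kernel-verified Lean document; each statement's English description precedes it below -/
import Mathlib

section
/- Let λ_τ > 0 and μ_τ > 0. Let A be exponentially distributed with rate λ_τ and B_τ be exponentially distributed with rate μ_τ. Let B and S be nonnegative random variables with 0 ≤ S ≤ B almost surely and E[B^2] < ∞, such that the pair (B,S), the variable A, and the variable B_τ are mutually independent. Then for every μ > 0, |μ·P(S/μ > B_τ and B/μ < A) − μ_τ·E[S]| ≤ (λ_τ + μ_τ)^2·E[B^2]/μ. -/
open MeasureTheory ProbabilityTheory

/-- Mutual independence of three random variables `f, g, h` (with values in possibly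
different measurable spaces), expressed through the factorization of the joint law
over all triples of measurable sets.  (Taking one of the sets to be `univ` recovers
the pairwise factorizations, so this is the usual notion of mutual independence.) -/
def MutIndep3 {Ω α β γ : Type*} [MeasurableSpace Ω] [MeasurableSpace α]
    [MeasurableSpace β] [MeasurableSpace γ]
    (P : MeasureTheory.Measure Ω) (f : Ω → α) (g : Ω → β) (h : Ω → γ) : Prop :=
  ∀ s t u, MeasurableSet s → MeasurableSet t → MeasurableSet u →
    P (f ⁻¹' s ∩ g ⁻¹' t ∩ h ⁻¹' u) = P (f ⁻¹' s) * P (g ⁻¹' t) * P (h ⁻¹' u)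

/-!
Conditionally on `(B, S)` the event has probability
`exp (-λτ B / μ) * (1 - exp (-μτ S / μ))`, and to first order this is `v = μτ S / μ`: with
`u = λτ B / μ` the error is at most `v * (u + v)`, because `1 - exp (-v)` lies between `v * (1 - v)`
and `v`, and the factor `exp (-u)` costs at most `u * v` more. Since `S ≤ B`, the error is at most
`(λτ + μτ)² (B / μ)²`; take expectations and multiply by `μ`.
-/

theorem abs_exp_neg_mul_one_sub_exp_neg_sub_le {u v : ℝ} (hu : 0 ≤ u) (hv : 0 ≤ v) :
    |Real.exp (-u) * (1 - Real.exp (-v)) - v| ≤ v * (u + v) := by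
  have hlower : v * (1 - v) ≤ 1 - Real.exp (-v) :=
    calc v * (1 - v) ≤ v * Real.exp (-v) := by gcongr; exact Real.one_sub_le_exp_neg v
      _ = (v + 1) * Real.exp (-v) - Real.exp (-v) := by ring
      _ ≤ Real.exp v * Real.exp (-v) - Real.exp (-v) := by gcongr; exact Real.add_one_le_exp v
      _ = 1 - Real.exp (-v) := by rw [← Real.exp_add, add_neg_cancel, Real.exp_zero]
  have hupper : 1 - Real.exp (-v) ≤ v := by linarith [Real.one_sub_le_exp_neg v]
  have hnonneg : 0 ≤ 1 - Real.exp (-v) := by simpa using hv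
  have hdamping_le : Real.exp (-u) * (1 - Real.exp (-v)) ≤ 1 - Real.exp (-v) :=
    mul_le_of_le_one_left hnonneg (by simpa using hu)
  have hle_damping : 1 - Real.exp (-v) - u * v ≤ Real.exp (-u) * (1 - Real.exp (-v)) :=
    calc 1 - Real.exp (-v) - u * v ≤ 1 - Real.exp (-v) - u * (1 - Real.exp (-v)) := by gcongr
      _ = (1 - u) * (1 - Real.exp (-v)) := by ring
      _ ≤ Real.exp (-u) * (1 - Real.exp (-v)) := by gcongr; exact Real.one_sub_le_exp_neg u
  rw [abs_le]
  constructor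
  · linarith
  · linarith [mul_nonneg hv (add_nonneg hu hv)]

section ExponentialLaw

variable {Ω : Type*} [MeasurableSpace Ω] {P : Measure Ω} {r x : ℝ}

instance nullSingletonClass_expMeasure : NullSingletonClass (expMeasure r) :=
  nullSingletonClass_withDensity _

theorem measureReal_expMeasure_Iic (hr : 0 < r) (hx : 0 ≤ x) :
    (expMeasure r).real (Set.Iic x) = 1 - Real.exp (-(r * x)) := by
  have := isProbabilityMeasure_expMeasure hr
  rw [← cdf_eq_real, cdf_expMeasure_eq hr, if_pos hx]

theorem measureReal_expMeasure_Iio (hr : 0 < r) (hx : 0 ≤ x) :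
    (expMeasure r).real (Set.Iio x) = 1 - Real.exp (-(r * x)) := by
  rw [measureReal_congr Iio_ae_eq_Iic, measureReal_expMeasure_Iic hr hx]

theorem measureReal_expMeasure_Ioi (hr : 0 < r) (hx : 0 ≤ x) :
    (expMeasure r).real (Set.Ioi x) = Real.exp (-(r * x)) := by
  have := isProbabilityMeasure_expMeasure hr
  rw [← Set.compl_Iic, probReal_compl_eq_one_sub measurableSet_Iic,
    measureReal_expMeasure_Iic hr hx, sub_sub_cancel]

theorem hasLaw_expMeasure_of_tail [IsProbabilityMeasure P] {T : Ω → ℝ} (hr : 0 < r)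
    (hT : AEMeasurable T P)
    (htail : ∀ t, 0 ≤ t → P {ω | t < T ω} = ENNReal.ofReal (Real.exp (-(r * t)))) :
    HasLaw T (expMeasure r) P where
  aemeasurable := hT
  map_eq := by
    have := isProbabilityMeasure_expMeasure hr
    have := Measure.isProbabilityMeasure_map hT
    have hcdf_of_nonneg {t : ℝ} (ht : 0 ≤ t) : cdf (P.map T) t = 1 - Real.exp (-(r * t)) := by
      have hIoi : (P.map T).real (Set.Ioi t) = Real.exp (-(r * t)) := by
        rw [map_measureReal_apply_of_aemeasurable hT measurableSet_Ioi, measureReal_def]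
        change (P {ω | t < T ω}).toReal = _
        rw [htail t ht, ENNReal.toReal_ofReal (Real.exp_nonneg _)]
      rw [cdf_eq_real, ← Set.compl_Ioi, probReal_compl_eq_one_sub measurableSet_Ioi, hIoi]
    refine Measure.eq_of_cdf _ _ (StieltjesFunction.ext fun t => ?_)
    rw [cdf_expMeasure_eq hr]
    split_ifs with ht
    · exact hcdf_of_nonneg ht
    · refine le_antisymm ?_ (cdf_nonneg _ t)
      calc cdf (P.map T) t ≤ cdf (P.map T) 0 := monotone_cdf _ (not_le.mp ht).le
        _ = 0 := by simp [hcdf_of_nonneg le_rfl]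

end ExponentialLaw

namespace MutIndep3

variable {Ω α β γ : Type*} [MeasurableSpace Ω] [MeasurableSpace α] [MeasurableSpace β]
  [MeasurableSpace γ] {P : Measure Ω} {f : Ω → α} {g : Ω → β} {h : Ω → γ}

theorem comp_left {δ : Type*} [MeasurableSpace δ] {φ : α → δ} (hind : MutIndep3 P f g h)
    (hφ : Measurable φ) : MutIndep3 P (φ ∘ f) g h :=
  fun s t u hs ht hu => hind (φ ⁻¹' s) t u (hφ hs) ht hu

theorem hasLaw_prodMk [IsFiniteMeasure P] {μ : Measure α} {ν : Measure β} {ρ : Measure γ}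
    (hind : MutIndep3 P f g h) (hf : HasLaw f μ P) (hg : HasLaw g ν P) (hh : HasLaw h ρ P) :
    HasLaw (fun ω => (f ω, g ω, h ω)) (μ.prod (ν.prod ρ)) P where
  map_eq := by
    have := hf.isFiniteMeasure_iff.mp ‹_›
    have := hg.isFiniteMeasure_iff.mp ‹_›
    have := hh.isFiniteMeasure_iff.mp ‹_›
    refine Measure.ext_prod₃ fun {s t u} hs ht hu => ?_
    rw [Measure.map_apply_of_aemeasurable (by fun_prop) (hs.prod (ht.prod hu)),
      Measure.prod_prod, Measure.prod_prod, ← hf.map_eq, ← hg.map_eq, ← hh.map_eq,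
      Measure.map_apply_of_aemeasurable hf.aemeasurable hs,
      Measure.map_apply_of_aemeasurable hg.aemeasurable ht,
      Measure.map_apply_of_aemeasurable hh.aemeasurable hu, ← mul_assoc, ← hind s t u hs ht hu,
      Set.inter_assoc]
    rfl

theorem measure_mem_and_mem [IsFiniteMeasure P] {ν : Measure β} {ρ : Measure γ}
    {s : Set (α × β)} {t : Set (α × γ)} (hind : MutIndep3 P f g h) (hf : AEMeasurable f P)
    (hg : HasLaw g ν P) (hh : HasLaw h ρ P) (hs : MeasurableSet s) (ht : MeasurableSet t) :
    P {ω | (f ω, g ω) ∈ s ∧ (f ω, h ω) ∈ t} =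
      ∫⁻ ω, ν (Prod.mk (f ω) ⁻¹' s) * ρ (Prod.mk (f ω) ⁻¹' t) ∂P := by
  have := hg.isFiniteMeasure_iff.mp ‹_›
  have := hh.isFiniteMeasure_iff.mp ‹_›
  have hmeas : MeasurableSet {z : α × β × γ | (z.1, z.2.1) ∈ s ∧ (z.1, z.2.2) ∈ t} :=
    .inter (hs.preimage (by fun_prop)) (ht.preimage (by fun_prop))
  rw [(hind.hasLaw_prodMk ⟨hf, rfl⟩ hg hh).measure_eq hmeas, Measure.prod_apply hmeas,
    lintegral_map' (measurable_measure_prodMk_left hmeas).aemeasurable hf]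
  exact lintegral_congr fun ω => Measure.prod_prod (Prod.mk (f ω) ⁻¹' s) (Prod.mk (f ω) ⁻¹' t)

variable {l m : ℝ} {A T B S : Ω → ℝ}

theorem measureReal_lt_and_lt
    (hind : MutIndep3 P (fun ω => (B ω, S ω)) A T) (hl : 0 < l) (hm : 0 < m)
    (hA : HasLaw A (expMeasure l) P) (hT : HasLaw T (expMeasure m) P)
    (hB : AEMeasurable B P) (hS : AEMeasurable S P) (hB0 : 0 ≤ᵐ[P] B) (hS0 : 0 ≤ᵐ[P] S) :
    P.real {ω | T ω < S ω ∧ B ω < A ω} =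
      ∫ ω, Real.exp (-(l * B ω)) * (1 - Real.exp (-(m * S ω))) ∂P := by
  have := isProbabilityMeasure_expMeasure hl
  have := isProbabilityMeasure_expMeasure hm
  have := hA.isProbabilityMeasure
  have hlt_left : MeasurableSet {z : (ℝ × ℝ) × ℝ | z.1.1 < z.2} :=
    measurableSet_lt (by fun_prop) (by fun_prop)
  have hlt_right : MeasurableSet {z : (ℝ × ℝ) × ℝ | z.2 < z.1.2} :=
    measurableSet_lt (by fun_prop) (by fun_prop)
  have hevent := hind.measure_mem_and_mem (by fun_prop) hA hT hlt_left hlt_right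
  simp only [Set.mem_ofPred_eq, and_comm (a := B _ < A _)] at hevent
  have hnonneg : 0 ≤ᵐ[P] fun ω => Real.exp (-(l * B ω)) * (1 - Real.exp (-(m * S ω))) := by
    filter_upwards [hS0] with ω hS0
    exact mul_nonneg (Real.exp_nonneg _)
      (sub_nonneg.mpr (Real.exp_le_one_iff.mpr (neg_nonpos.mpr (mul_nonneg hm.le hS0))))
  rw [measureReal_def, hevent, integral_eq_lintegral_of_nonneg_ae hnonneg (by fun_prop)]
  congr 1
  refine lintegral_congr_ae ?_
  filter_upwards [hB0, hS0] with ω hB0 hS0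
  rw [ENNReal.ofReal_mul (Real.exp_nonneg _), ← measureReal_expMeasure_Ioi hl hB0,
    ← measureReal_expMeasure_Iio hm hS0, ofReal_measureReal, ofReal_measureReal]
  rfl

theorem abs_measureReal_lt_and_lt_sub_le
    (hind : MutIndep3 P (fun ω => (B ω, S ω)) A T) (hl : 0 < l) (hm : 0 < m)
    (hA : HasLaw A (expMeasure l) P) (hT : HasLaw T (expMeasure m) P)
    (hB : AEMeasurable B P) (hS : AEMeasurable S P) (hS0 : 0 ≤ᵐ[P] S) (hSB : S ≤ᵐ[P] B)
    (hB2 : Integrable (fun ω => B ω ^ 2) P) :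
    |P.real {ω | T ω < S ω ∧ B ω < A ω} - m * ∫ ω, S ω ∂P| ≤
      (l + m) ^ 2 * ∫ ω, B ω ^ 2 ∂P := by
  have := isProbabilityMeasure_expMeasure hl
  have := hA.isProbabilityMeasure
  have hB0 : 0 ≤ᵐ[P] B := hS0.trans hSB
  have hS_int : Integrable S P := by
    refine (((memLp_two_iff_integrable_sq hB.aestronglyMeasurable).mpr hB2).integrable
      one_le_two).mono' hS.aestronglyMeasurable ?_
    filter_upwards [hS0, hSB] with ω hS0 hSB
    rwa [Real.norm_of_nonneg hS0]
  have hexp_int :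
      Integrable (fun ω => Real.exp (-(l * B ω)) * (1 - Real.exp (-(m * S ω)))) P := by
    refine .of_bound (by fun_prop) 1 ?_
    filter_upwards [hB0, hS0] with ω hB0 hS0
    have hlB : 0 ≤ l * B ω := mul_nonneg hl.le hB0
    have hmS : 0 ≤ m * S ω := mul_nonneg hm.le hS0
    rw [norm_mul, Real.norm_of_nonneg (Real.exp_nonneg _), Real.norm_of_nonneg (by simpa using hmS)]
    exact mul_le_one₀ (by simpa using hlB) (by simpa using hmS)
      (sub_le_self _ (Real.exp_nonneg _))
  rw [hind.measureReal_lt_and_lt hl hm hA hT hB hS hB0 hS0, ← integral_const_mul,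
    ← integral_const_mul, ← integral_sub hexp_int (hS_int.const_mul m), ← Real.norm_eq_abs]
  refine norm_integral_le_of_norm_le (hB2.const_mul _) ?_
  filter_upwards [hB0, hS0, hSB] with ω hB0 hS0 hSB
  have hlB : 0 ≤ l * B ω := mul_nonneg hl.le hB0
  have hmS : 0 ≤ m * S ω := mul_nonneg hm.le hS0
  have hmSB : m * S ω ≤ m * B ω := mul_le_mul_of_nonneg_left hSB hm.le
  calc |Real.exp (-(l * B ω)) * (1 - Real.exp (-(m * S ω))) - m * S ω|
      ≤ m * S ω * (l * B ω + m * S ω) :=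
        abs_exp_neg_mul_one_sub_exp_neg_sub_le hlB hmS
    _ ≤ (l * B ω + m * B ω) * (l * B ω + m * B ω) :=
        mul_le_mul (by linarith) (by linarith) (by linarith) (by linarith)
    _ = (l + m) ^ 2 * B ω ^ 2 := by ring

end MutIndep3

/-- Let `λτ > 0` and `μτ > 0`.  Let `A` be exponential with rate `λτ` and
`Bτ` exponential with rate `μτ`.  Let `B, S` be nonnegative random variables with
`0 ≤ S ≤ B` a.s. and `E[B²] < ∞`, such that the pair `(B, S)`, the variable `A`, and the
variable `Bτ` are mutually independent.  Then for every `μ > 0`,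
`|μ P(S/μ > Bτ ∧ B/μ < A) - μτ E[S]| ≤ (λτ + μτ)² E[B²] / μ`. -/
theorem busy_cycle_service_prob_bound
    {Ω : Type*} [MeasurableSpace Ω] (P : Measure Ω) [IsProbabilityMeasure P]
    (lamτ muτ : ℝ) (hlam : 0 < lamτ) (hmu : 0 < muτ)
    (A Bτ B S : Ω → ℝ) (hA : Measurable A) (hBτ : Measurable Bτ)
    (hB : Measurable B) (hS : Measurable S)
    (hexpA : ∀ t : ℝ, 0 ≤ t → P {ω | A ω > t} = ENNReal.ofReal (Real.exp (-lamτ * t)))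
    (hexpBτ : ∀ t : ℝ, 0 ≤ t → P {ω | Bτ ω > t} = ENNReal.ofReal (Real.exp (-muτ * t)))
    (hS0 : ∀ᵐ ω ∂P, 0 ≤ S ω) (hSB : ∀ᵐ ω ∂P, S ω ≤ B ω)
    (hB2 : Integrable (fun ω => B ω ^ 2) P)
    (hindep : MutIndep3 P (fun ω => (B ω, S ω)) A Bτ) :
    ∀ μ : ℝ, 0 < μ →
      |μ * (P {ω | S ω / μ > Bτ ω ∧ B ω / μ < A ω}).toReal - muτ * (∫ ω, S ω ∂P)| ≤
        (lamτ + muτ) ^ 2 * (∫ ω, B ω ^ 2 ∂P) / μ := by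
  intro μ hμ
  have hA_law : HasLaw A (expMeasure lamτ) P :=
    hasLaw_expMeasure_of_tail hlam hA.aemeasurable (by simpa only [neg_mul] using hexpA)
  have hBτ_law : HasLaw Bτ (expMeasure muτ) P :=
    hasLaw_expMeasure_of_tail hmu hBτ.aemeasurable (by simpa only [neg_mul] using hexpBτ)
  have hindep_scaled : MutIndep3 P (fun ω => (B ω / μ, S ω / μ)) A Bτ :=
    hindep.comp_left (φ := fun p : ℝ × ℝ => (p.1 / μ, p.2 / μ)) (by fun_prop)
  have hbound := hindep_scaled.abs_measureReal_lt_and_lt_sub_le hlam hmu hA_law hBτ_law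
    (by fun_prop) (by fun_prop) (hS0.mono fun ω h => div_nonneg h hμ.le)
    (hSB.mono fun ω h => div_le_div_of_nonneg_right h hμ.le)
    (by simpa only [div_pow] using hB2.div_const (μ ^ 2))
  simp only [div_pow, integral_div] at hbound
  set p := P.real {ω | Bτ ω < S ω / μ ∧ B ω / μ < A ω}
  calc |μ * p - muτ * ∫ ω, S ω ∂P|
      = μ * |p - muτ * ((∫ ω, S ω ∂P) / μ)| := by
        rw [← abs_of_pos hμ, ← abs_mul, abs_of_pos hμ]
        congr 1
        field_simp
    _ ≤ μ * ((lamτ + muτ) ^ 2 * ((∫ ω, B ω ^ 2 ∂P) / μ ^ 2)) := by gcongr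
    _ = (lamτ + muτ) ^ 2 * (∫ ω, B ω ^ 2 ∂P) / μ := by field_simp
end

section
/- Let λ_τ > 0 and μ_τ > 0. Let A be exponentially distributed with rate λ_τ and B_τ be exponentially distributed with rate μ_τ. Let B and S be nonnegative random variables with 0 ≤ S ≤ B almost surely, E[B^2] < ∞ and E[B] > 0, such that the pair (B,S), the variable A, and the variable B_τ are mutually independent. For μ > 0 define q̄(μ) := P(S/μ > B_τ and B/μ < A) / ( P(S/μ > B_τ and B/μ < A) + P(B/μ > A) ). Then q̄(μ) → μ_τ·E[S] / (μ_τ·E[S] + λ_τ·E[B]) as μ → ∞. -/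
open MeasureTheory ProbabilityTheory Filter

/-!
Only the behaviour of `A` and `Bτ` near zero matters. Conditionally on `(B, S)`, the event
`A < B / μ` has probability `P(A < b)` at `b = B / μ`, and the event `Bτ < S / μ, B / μ < A` has
probability `P(Bτ < s) * P(A > b)` at `s = S / μ`. An exponential distribution function has slope
equal to its rate at `0` and, being bounded, lies below some line through the origin. Multiplied by
`μ`, the two conditional probabilities thus converge to `lamτ * B` and `muτ * S`, dominated by
constant multiples of `B` and `S`.
-/

open Set
open scoped Topology

/-- The mass that `ν` gives to the values below a small `t > 0` is `c * t` to first order, as for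
the exponential distribution with rate `c`. The left-continuous distribution function `ν (Iio t)`
is used because it is the one that gives the probability of a strict inequality. -/
def HasRateAtZero (ν : Measure ℝ) (c : ℝ) : Prop :=
  Tendsto (fun t => ν.real (Iio t) / t) (𝓝[>] 0) (𝓝 c)

lemma measureReal_Iio_of_exp_tail {ν : Measure ℝ} [IsProbabilityMeasure ν] {c : ℝ}
    (htail : ∀ t : ℝ, 0 ≤ t → ν (Ioi t) = ENNReal.ofReal (Real.exp (-c * t)))
    {t : ℝ} (ht : 0 < t) : ν.real (Iio t) = 1 - Real.exp (-c * t) := by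
  have hIic : ∀ s, 0 ≤ s → ν.real (Iic s) = 1 - Real.exp (-c * s) := fun s hs => by
    rw [← compl_Ioi, probReal_compl_eq_one_sub measurableSet_Ioi, measureReal_def, htail s hs,
      ENNReal.toReal_ofReal (Real.exp_pos _).le]
  refine le_antisymm ((measureReal_mono Iio_subset_Iic_self).trans_eq (hIic t ht.le)) ?_
  have hcont : Tendsto (fun s => 1 - Real.exp (-c * s)) (𝓝[<] t) (𝓝 (1 - Real.exp (-c * t))) :=
    (Continuous.tendsto (by fun_prop) t).mono_left nhdsWithin_le_nhds
  refine le_of_tendsto hcont ?_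
  filter_upwards [Ioo_mem_nhdsLT ht] with s hs
  rw [← hIic s hs.1.le]
  exact measureReal_mono (Iic_subset_Iio.2 hs.2)

lemma hasRateAtZero_of_exp_tail {ν : Measure ℝ} [IsProbabilityMeasure ν] {c : ℝ}
    (htail : ∀ t : ℝ, 0 ≤ t → ν (Ioi t) = ENNReal.ofReal (Real.exp (-c * t))) :
    HasRateAtZero ν c := by
  have hderiv : HasDerivAt (fun t : ℝ => 1 - Real.exp (-c * t)) c 0 := by
    simpa using (((hasDerivAt_id (0 : ℝ)).const_mul (-c)).exp).const_sub 1
  have hslope := (hasDerivWithinAt_iff_tendsto_slope' self_notMem_Ioi).1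
    (hderiv.hasDerivWithinAt (s := Ioi 0))
  refine hslope.congr' ?_
  filter_upwards [self_mem_nhdsWithin] with t ht
  simp [slope_def_field, measureReal_Iio_of_exp_tail htail ht]

lemma hasRateAtZero_map_of_exp_tail {Ω : Type*} [MeasurableSpace Ω] {P : Measure Ω}
    [IsProbabilityMeasure P] {X : Ω → ℝ} {c : ℝ} (hX : AEMeasurable X P)
    (htail : ∀ t : ℝ, 0 ≤ t → P {ω | X ω > t} = ENNReal.ofReal (Real.exp (-c * t))) :
    HasRateAtZero (P.map X) c := by
  have := Measure.isProbabilityMeasure_map hX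
  refine hasRateAtZero_of_exp_tail fun t ht => ?_
  rw [Measure.map_apply_of_aemeasurable hX measurableSet_Ioi, ← htail t ht]
  rfl

lemma measurable_measureReal_Iio (ν : Measure ℝ) [IsFiniteMeasure ν] :
    Measurable fun t => ν.real (Iio t) :=
  Monotone.measurable fun _ _ hst => measureReal_mono (Iio_subset_Iio hst)

lemma measurable_measureReal_Ioi (ν : Measure ℝ) [IsFiniteMeasure ν] :
    Measurable fun t => ν.real (Ioi t) :=
  Antitone.measurable fun _ _ hst => measureReal_mono (Ioi_subset_Ioi hst)

lemma tendsto_const_div_atTop_nhdsGE_zero {x : ℝ} (hx : 0 ≤ x) :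
    Tendsto (fun μ : ℝ => x / μ) atTop (𝓝[≥] 0) :=
  tendsto_nhdsWithin_iff.2 ⟨tendsto_const_nhds.div_atTop tendsto_id,
    (eventually_ge_atTop 0).mono fun _ hμ => div_nonneg hx hμ⟩

lemma tendsto_const_div_atTop_nhdsGT_zero {x : ℝ} (hx : 0 < x) :
    Tendsto (fun μ : ℝ => x / μ) atTop (𝓝[>] 0) :=
  tendsto_nhdsWithin_iff.2 ⟨tendsto_const_nhds.div_atTop tendsto_id,
    (eventually_gt_atTop 0).mono fun _ hμ => div_pos hx hμ⟩

namespace HasRateAtZero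

variable {ν : Measure ℝ} {c : ℝ}

lemma exists_measureReal_Iic_le [IsFiniteMeasure ν] (h : HasRateAtZero ν c) :
    ∃ C, ∀ t, 0 ≤ t → ν.real (Iic t) ≤ C * t := by
  obtain ⟨δ, hδ, hsmall⟩ : ∃ δ > 0, ∀ t ∈ Ioo 0 δ, ν.real (Iio t) / t < c + 1 :=
    mem_nhdsGT_iff_exists_Ioo_subset.1 (h.eventually_lt_const (lt_add_one c))
  let C := max (c + 1) (ν.real univ / δ)
  have hIio : ∀ t, 0 < t → ν.real (Iio t) ≤ C * t := fun t ht => by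
    rw [← div_le_iff₀ ht]
    rcases lt_or_ge t δ with htδ | hδt
    · exact (hsmall t ⟨ht, htδ⟩).le.trans (le_max_left _ _)
    · exact (div_le_div₀ measureReal_nonneg (measureReal_mono (subset_univ _)) hδ hδt).trans
        (le_max_right _ _)
  refine ⟨C, fun t ht => ?_⟩
  have hcont : Tendsto (fun s => C * s) (𝓝[>] t) (𝓝 (C * t)) :=
    (Continuous.tendsto (by fun_prop) t).mono_left nhdsWithin_le_nhds
  refine ge_of_tendsto hcont ?_
  filter_upwards [self_mem_nhdsWithin] with s hs
  exact (measureReal_mono (Iic_subset_Iio.2 hs)).trans (hIio s (ht.trans_lt hs))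

lemma tendsto_mul_measureReal_Iio_div [IsFiniteMeasure ν] (h : HasRateAtZero ν c) {x : ℝ}
    (hx : 0 ≤ x) : Tendsto (fun μ => μ * ν.real (Iio (x / μ))) atTop (𝓝 (c * x)) := by
  rcases hx.eq_or_lt with rfl | hx
  · obtain ⟨C, hC⟩ := h.exists_measureReal_Iic_le
    have hzero : ν.real (Iio 0) = 0 :=
      le_antisymm ((measureReal_mono Iio_subset_Iic_self).trans (by simpa using hC 0 le_rfl))
        measureReal_nonneg
    simp [hzero]
  · refine ((h.comp (tendsto_const_div_atTop_nhdsGT_zero hx)).mul_const x).congr fun μ => ?_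
    simp only [Function.comp_apply]
    field_simp

lemma tendsto_measureReal_Ioi [IsProbabilityMeasure ν] (h : HasRateAtZero ν c) :
    Tendsto (fun t => ν.real (Ioi t)) (𝓝[≥] 0) (𝓝 1) := by
  obtain ⟨C, hC⟩ := h.exists_measureReal_Iic_le
  have hIic : Tendsto (fun t => ν.real (Iic t)) (𝓝[≥] 0) (𝓝 0) := by
    have hcont : Tendsto (fun t => C * t) (𝓝[≥] 0) (𝓝 (C * 0)) :=
      (Continuous.tendsto (by fun_prop) 0).mono_left nhdsWithin_le_nhds
    rw [mul_zero] at hcont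
    exact tendsto_of_tendsto_of_tendsto_of_le_of_le' tendsto_const_nhds hcont
      (Eventually.of_forall fun _ => measureReal_nonneg) (eventually_mem_nhdsWithin.mono hC)
  have hcompl : ∀ t, 1 - ν.real (Iic t) = ν.real (Ioi t) := fun t => by
    rw [← probReal_compl_eq_one_sub measurableSet_Iic, compl_Iic]
  simpa only [hcompl, sub_zero] using hIic.const_sub 1

lemma tendsto_mul_integral [IsFiniteMeasure ν] (h : HasRateAtZero ν c) {Ω : Type*}
    [MeasurableSpace Ω] {P : Measure Ω} {X : Ω → ℝ} (hX : Integrable X P)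
    (hX0 : ∀ᵐ ω ∂P, 0 ≤ X ω) {w : ℝ → Ω → ℝ} (hw : ∀ μ, AEStronglyMeasurable (w μ) P)
    (hw_le : ∀ μ ω, ‖w μ ω‖ ≤ 1) (hw_lim : ∀ᵐ ω ∂P, Tendsto (fun μ => w μ ω) atTop (𝓝 1)) :
    Tendsto (fun μ => μ * ∫ ω, ν.real (Iio (X ω / μ)) * w μ ω ∂P) atTop
      (𝓝 (c * ∫ ω, X ω ∂P)) := by
  obtain ⟨C, hC⟩ := h.exists_measureReal_Iic_le
  simp only [← integral_const_mul, ← mul_assoc]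
  refine tendsto_integral_filter_of_dominated_convergence (fun ω => C * X ω) ?_ ?_
    (hX.const_mul C) ?_
  · refine Eventually.of_forall fun μ => AEStronglyMeasurable.mul ?_ (hw μ)
    exact (((measurable_measureReal_Iio ν).comp_aemeasurable
      (hX.aemeasurable.div_const μ)).const_mul μ).aestronglyMeasurable
  · filter_upwards [eventually_gt_atTop 0] with μ hμ
    filter_upwards [hX0] with ω hω
    calc ‖μ * ν.real (Iio (X ω / μ)) * w μ ω‖
        ≤ ‖μ * ν.real (Iio (X ω / μ))‖ := by
          rw [norm_mul]
          exact mul_le_of_le_one_right (norm_nonneg _) (hw_le μ ω)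
      _ = μ * ν.real (Iio (X ω / μ)) := Real.norm_of_nonneg (by positivity)
      _ ≤ μ * (C * (X ω / μ)) := by
          gcongr
          exact (measureReal_mono Iio_subset_Iic_self).trans (hC _ (by positivity))
      _ = C * X ω := by field_simp
  · filter_upwards [hX0, hw_lim] with ω hω hlim
    simpa only [mul_one] using (h.tendsto_mul_measureReal_Iio_div hω).mul hlim

end HasRateAtZero

section Independence

variable {Ω α β γ : Type*} [MeasurableSpace Ω] [MeasurableSpace α] [MeasurableSpace β]
  [MeasurableSpace γ] {P : Measure Ω}

lemma MutIndep3.indepFun_right [IsProbabilityMeasure P] {X : Ω → α} {Y : Ω → β} {Z : Ω → γ}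
    (h : MutIndep3 P X Y Z) : IndepFun Y Z P :=
  indepFun_iff_measure_inter_preimage_eq_mul.2 fun t u ht hu => by
    simpa using h univ t u .univ ht hu

lemma MutIndep3.indepFun_prodMk [IsProbabilityMeasure P] {X : Ω → α} {Y : Ω → β} {Z : Ω → γ}
    (hX : AEMeasurable X P) (hY : AEMeasurable Y P) (hZ : AEMeasurable Z P)
    (h : MutIndep3 P X Y Z) : IndepFun X (fun ω => (Y ω, Z ω)) P := by
  rw [indepFun_iff_map_prod_eq_prod_map_map hX (hY.prodMk hZ),
    h.indepFun_right.map_prod_eq_prod_map_map hY hZ]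
  refine Measure.ext_prod₃ fun {s t u} hs ht hu => ?_
  rw [Measure.map_apply_of_aemeasurable (hX.prodMk (hY.prodMk hZ)) (hs.prod (ht.prod hu)),
    Measure.prod_prod, Measure.prod_prod, Measure.map_apply_of_aemeasurable hX hs,
    Measure.map_apply_of_aemeasurable hY ht, Measure.map_apply_of_aemeasurable hZ hu,
    ← mul_assoc, ← h s t u hs ht hu, inter_assoc]
  rfl

lemma measureReal_prodMk_mem_eq_integral [IsFiniteMeasure P] {X : Ω → α} {Y : Ω → β}
    (hX : AEMeasurable X P) (hY : AEMeasurable Y P) (h : IndepFun X Y P) {s : Set (α × β)}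
    (hs : MeasurableSet s) :
    P.real {ω | (X ω, Y ω) ∈ s} = ∫ ω, (P.map Y).real (Prod.mk (X ω) ⁻¹' s) ∂P := by
  have hslice : Measurable fun x => P.map Y (Prod.mk x ⁻¹' s) :=
    measurable_measure_prodMk_left hs
  have hlintegral : P {ω | (X ω, Y ω) ∈ s} = ∫⁻ ω, P.map Y (Prod.mk (X ω) ⁻¹' s) ∂P := by
    rw [← lintegral_map' hslice.aemeasurable hX, ← Measure.prod_apply hs,
      ← h.map_prod_eq_prod_map_map hX hY,
      Measure.map_apply_of_aemeasurable (hX.prodMk hY) hs]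
    rfl
  rw [measureReal_def, hlintegral]
  exact (integral_toReal (hslice.comp_aemeasurable hX)
    (Eventually.of_forall fun _ => measure_lt_top _ _)).symm

end Independence

section Rates

variable {Ω : Type*} [MeasurableSpace Ω] {P : Measure Ω}

lemma tendsto_mul_measureReal_lt_div [IsFiniteMeasure P] {X Y : Ω → ℝ} {c : ℝ}
    (hX : Integrable X P) (hX0 : ∀ᵐ ω ∂P, 0 ≤ X ω) (hY : AEMeasurable Y P)
    (hrate : HasRateAtZero (P.map Y) c) (hindep : IndepFun X Y P) :
    Tendsto (fun μ => μ * P.real {ω | Y ω < X ω / μ}) atTop (𝓝 (c * ∫ ω, X ω ∂P)) := by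
  have hprob : ∀ μ, P.real {ω | Y ω < X ω / μ} = ∫ ω, (P.map Y).real (Iio (X ω / μ)) ∂P :=
    fun μ => measureReal_prodMk_mem_eq_integral hX.aemeasurable hY hindep
      (s := {p | p.2 < p.1 / μ}) (measurableSet_lt (by fun_prop) (by fun_prop))
  simpa only [hprob, mul_one] using hrate.tendsto_mul_integral hX hX0 (w := fun _ _ => 1)
    (fun _ => aestronglyMeasurable_const) (fun _ _ => norm_one.le)
    (Eventually.of_forall fun _ => tendsto_const_nhds)

lemma measureReal_lt_and_lt_eq_integral [IsProbabilityMeasure P] {A Bτ B S : Ω → ℝ}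
    (hA : AEMeasurable A P) (hBτ : AEMeasurable Bτ P) (hB : AEMeasurable B P)
    (hS : AEMeasurable S P)
    (hindep : MutIndep3 P (fun ω => (B ω, S ω)) A Bτ) (μ : ℝ) :
    P.real {ω | Bτ ω < S ω / μ ∧ B ω / μ < A ω} =
      ∫ ω, (P.map Bτ).real (Iio (S ω / μ)) * (P.map A).real (Ioi (B ω / μ)) ∂P := by
  let E : Set ((ℝ × ℝ) × ℝ × ℝ) := {p | p.2.2 < p.1.2 / μ} ∩ {p | p.1.1 / μ < p.2.1}
  have hE : MeasurableSet E :=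
    (measurableSet_lt (by fun_prop) (by fun_prop)).inter
      (measurableSet_lt (by fun_prop) (by fun_prop))
  have hslice : ∀ b s, Prod.mk (b, s) ⁻¹' E = Ioi (b / μ) ×ˢ Iio (s / μ) := fun b s => by
    ext p
    exact and_comm
  have hmap := hindep.indepFun_right.map_prod_eq_prod_map_map hA hBτ
  refine (measureReal_prodMk_mem_eq_integral (hB.prodMk hS) (hA.prodMk hBτ)
    (hindep.indepFun_prodMk (hB.prodMk hS) hA hBτ) hE).trans ?_
  simp only [hslice, hmap, measureReal_prod_prod, mul_comm]

lemma tendsto_mul_measureReal_lt_div_and_div_lt [IsProbabilityMeasure P] {A Bτ B S : Ω → ℝ}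
    {lamτ muτ : ℝ} (hA : AEMeasurable A P) (hBτ : AEMeasurable Bτ P)
    (hrateA : HasRateAtZero (P.map A) lamτ) (hrateBτ : HasRateAtZero (P.map Bτ) muτ)
    (hB : AEMeasurable B P) (hB0 : ∀ᵐ ω ∂P, 0 ≤ B ω) (hS : Integrable S P) (hS0 : ∀ᵐ ω ∂P, 0 ≤ S ω)
    (hindep : MutIndep3 P (fun ω => (B ω, S ω)) A Bτ) :
    Tendsto (fun μ => μ * P.real {ω | Bτ ω < S ω / μ ∧ B ω / μ < A ω}) atTop
      (𝓝 (muτ * ∫ ω, S ω ∂P)) := by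
  have := Measure.isProbabilityMeasure_map hA
  simp only [measureReal_lt_and_lt_eq_integral hA hBτ hB hS.aemeasurable hindep]
  refine hrateBτ.tendsto_mul_integral hS hS0 (fun μ => ?_) (fun μ ω => ?_) ?_
  · exact ((measurable_measureReal_Ioi (P.map A)).comp_aemeasurable
      (hB.div_const μ)).aestronglyMeasurable
  · exact (Real.norm_of_nonneg measureReal_nonneg).trans_le measureReal_le_one
  · filter_upwards [hB0] with ω hω
    exact hrateA.tendsto_measureReal_Ioi.comp (tendsto_const_div_atTop_nhdsGE_zero hω)

end Rates

theorem lower_bound_transition_prob_limit_general {Ω : Type*} [MeasurableSpace Ω]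
    {P : Measure Ω} [IsProbabilityMeasure P] {lamτ muτ : ℝ} {A Bτ B S : Ω → ℝ}
    (hA : AEMeasurable A P) (hBτ : AEMeasurable Bτ P) (hrateA : HasRateAtZero (P.map A) lamτ)
    (hrateBτ : HasRateAtZero (P.map Bτ) muτ) (hB0 : ∀ᵐ ω ∂P, 0 ≤ B ω)
    (hS0 : ∀ᵐ ω ∂P, 0 ≤ S ω) (hB : Integrable B P) (hS : Integrable S P)
    (hne : muτ * (∫ ω, S ω ∂P) + lamτ * (∫ ω, B ω ∂P) ≠ 0)
    (hindep : MutIndep3 P (fun ω => (B ω, S ω)) A Bτ) :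
    Tendsto
      (fun μ : ℝ =>
        P.real {ω | S ω / μ > Bτ ω ∧ B ω / μ < A ω} /
          (P.real {ω | S ω / μ > Bτ ω ∧ B ω / μ < A ω} + P.real {ω | B ω / μ > A ω}))
      atTop
      (𝓝 (muτ * (∫ ω, S ω ∂P) / (muτ * (∫ ω, S ω ∂P) + lamτ * (∫ ω, B ω ∂P)))) := by
  have hpair : AEMeasurable (fun ω => (B ω, S ω)) P := hB.aemeasurable.prodMk hS.aemeasurable
  have hindepBA : IndepFun B A P :=
    (hindep.indepFun_prodMk hpair hA hBτ).comp measurable_fst measurable_fst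
  have hboth := tendsto_mul_measureReal_lt_div_and_div_lt hA hBτ hrateA hrateBτ hB.aemeasurable
    hB0 hS hS0 hindep
  have hlt := tendsto_mul_measureReal_lt_div hB hB0 hA hrateA hindepBA
  refine (hboth.div (hboth.add hlt) hne).congr' ?_
  filter_upwards [eventually_ne_atTop 0] with μ hμ
  simp only [Pi.div_apply, ← mul_add]
  exact mul_div_mul_left _ _ hμ

/-- Let `λτ, μτ > 0`, `A` exponential with rate `λτ`, `Bτ` exponential with
rate `μτ`.  Let `B, S` be nonnegative random variables with `0 ≤ S ≤ B` a.s.,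
`E[B²] < ∞` and `E[B] > 0`, such that the pair `(B, S)`, the variable `A` and the
variable `Bτ` are mutually independent.  For `μ > 0` define
`q̄(μ) := P(S/μ > Bτ ∧ B/μ < A) / (P(S/μ > Bτ ∧ B/μ < A) + P(B/μ > A))`.
Then `q̄(μ) → μτ E[S] / (μτ E[S] + λτ E[B])` as `μ → ∞`. -/
theorem lower_bound_transition_prob_limit
    {Ω : Type*} [MeasurableSpace Ω] (P : Measure Ω) [IsProbabilityMeasure P]
    (lamτ muτ : ℝ) (hlam : 0 < lamτ) (hmu : 0 < muτ)
    (A Bτ B S : Ω → ℝ) (hA : Measurable A) (hBτ : Measurable Bτ)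
    (hB : Measurable B) (hS : Measurable S)
    (hexpA : ∀ t : ℝ, 0 ≤ t → P {ω | A ω > t} = ENNReal.ofReal (Real.exp (-lamτ * t)))
    (hexpBτ : ∀ t : ℝ, 0 ≤ t → P {ω | Bτ ω > t} = ENNReal.ofReal (Real.exp (-muτ * t)))
    (hS0 : ∀ᵐ ω ∂P, 0 ≤ S ω) (hSB : ∀ᵐ ω ∂P, S ω ≤ B ω)
    (hB2 : Integrable (fun ω => B ω ^ 2) P) (hEB : 0 < ∫ ω, B ω ∂P)
    (hindep : MutIndep3 P (fun ω => (B ω, S ω)) A Bτ) :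
    Tendsto
      (fun μ : ℝ =>
        (P {ω | S ω / μ > Bτ ω ∧ B ω / μ < A ω}).toReal /
          ((P {ω | S ω / μ > Bτ ω ∧ B ω / μ < A ω}).toReal +
            (P {ω | B ω / μ > A ω}).toReal))
      atTop
      (nhds (muτ * (∫ ω, S ω ∂P) / (muτ * (∫ ω, S ω ∂P) + lamτ * (∫ ω, B ω ∂P)))) := by
  have hB0 : ∀ᵐ ω ∂P, 0 ≤ B ω := by
    filter_upwards [hS0, hSB] with ω h0 h1 using h0.trans h1
  have hBint : Integrable B P :=
    ((memLp_two_iff_integrable_sq hB.aestronglyMeasurable).2 hB2).integrable one_le_two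
  have hSint : Integrable S P :=
    hBint.mono' hS.aestronglyMeasurable <| by
      filter_upwards [hS0, hSB] with ω h0 h1 using (Real.norm_of_nonneg h0).trans_le h1
  have hES : 0 ≤ ∫ ω, S ω ∂P := integral_nonneg_of_ae hS0
  exact lower_bound_transition_prob_limit_general hA.aemeasurable hBτ.aemeasurable
    (hasRateAtZero_map_of_exp_tail hA.aemeasurable hexpA)
    (hasRateAtZero_map_of_exp_tail hBτ.aemeasurable hexpBτ) hB0 hS0 hBint hSint
    (by positivity) hindep
end
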